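/- Let 0 ≤ α < ω₁ and let (X_t)_{t∈T} be a family of nonempty topological spaces such that X = ∏_{t∈T} X_t is pseudo-ℵ₁-compact and such that for every at most countable set T₀ ⊆ T the product ∏_{t∈T₀} X_t is α-universal and hereditarily pseudo-ℵ₁-compact. Then every functionally measurable set E ⊆ X is α-embedded in X. -/

import Mathlib

/-!
Everything reduces to the claim that a continuous real function `f` on a set `E ⊆ ∏ t, X t`
determined by countably many coordinates itself depends on countably many coordinates
(`exists_countable_dependsOn`). Applied to the whole product, it shows that the functionally
measurable set `E` is determined by a countable set of coordinates; applied to `E`, it shows that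
a set `B` of multiplicative class `α` in `E` is the preimage of its projection to a countable
subproduct. A continuous section of the projection shows that this image of `B` is of
multiplicative class `α` in the image of `E`; α-universality of the countable subproduct extends
it, and the preimage of the extension is as required.

For the claim, suppose that for some `ε > 0` no countable set of coordinates determines `f` up to
`ε`. A maximality argument gives uncountably many pairs of basic open boxes whose values under `f`
are more than `ε` apart and which differ only on finite, pairwise disjoint sets of coordinates.
After passing to an uncountable subfamily, the supports of the boxes are pairwise disjoint off a
countable set `R` (a weak `Δ`-system lemma). Hereditary pseudo-ℵ₁-compactness of the subproduct
over `R` and the coordinates determining `E` yields a point at which the projected boxes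
accumulate. It lifts to a point of `E` each of whose neighbourhoods meets both boxes of some pair,
contradicting the continuity of `f` (`countable_of_separates`).
-/

open Set Topology

/-- A topological space is pseudo-ℵ₁-compact if every locally finite family of
(pairwise distinct) nonempty open subsets is at most countable. -/
def PseudoAleph1Compact (Z : Type*) [TopologicalSpace Z] : Prop :=
  ∀ 𝒰 : Set (Set Z), (∀ U ∈ 𝒰, IsOpen U) → (∀ U ∈ 𝒰, U.Nonempty) →
    LocallyFinite (fun U : 𝒰 => (U : Set Z)) → 𝒰.Countable

/-- `A` is functionally closed in `Z` if it is the zero set of a continuous real function. -/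
def FunctionallyClosed {Z : Type*} [TopologicalSpace Z] (A : Set Z) : Prop :=
  ∃ f : Z → ℝ, Continuous f ∧ A = f ⁻¹' {0}

/-- `A` is functionally open in `Z` if its complement is functionally closed. -/
def FunctionallyOpen {Z : Type*} [TopologicalSpace Z] (A : Set Z) : Prop :=
  FunctionallyClosed Aᶜ

/-- `FunClass Z true α A` : `A` is of the functionally additive class `α` in `Z`;
`FunClass Z false α A` : `A` is of the functionally multiplicative class `α` in `Z`. -/
inductive FunClass (Z : Type*) [TopologicalSpace Z] : Bool → Ordinal.{0} → Set Z → Prop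
  | open_ (A : Set Z) (h : FunctionallyOpen A) : FunClass Z true 0 A
  | closed_ (A : Set Z) (h : FunctionallyClosed A) : FunClass Z false 0 A
  | union (α : Ordinal.{0}) (A : ℕ → Set Z) (β : ℕ → Ordinal.{0}) (hα : α ≠ 0)
      (hβ : ∀ n, β n < α) (h : ∀ n, FunClass Z false (β n) (A n)) :
      FunClass Z true α (⋃ n, A n)
  | inter (α : Ordinal.{0}) (A : ℕ → Set Z) (β : ℕ → Ordinal.{0}) (hα : α ≠ 0)
      (hβ : ∀ n, β n < α) (h : ∀ n, FunClass Z true (β n) (A n)) :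
      FunClass Z false α (⋂ n, A n)

/-- `A` is α-embedded in `Z` if every subset of `A` of functionally multiplicative class `α`
in the subspace `A` is the trace on `A` of a set of functionally multiplicative class `α` in `Z`. -/
def IsAlphaEmbedded {Z : Type*} [TopologicalSpace Z] (α : Ordinal.{0}) (A : Set Z) : Prop :=
  ∀ B : Set Z, B ⊆ A → FunClass ↥A false α (Subtype.val ⁻¹' B) →
    ∃ C : Set Z, FunClass Z false α C ∧ C ∩ A = B

/-- `Z` is α-universal if every subset of `Z` is α-embedded in `Z`. -/
def AlphaUniversal (Z : Type*) [TopologicalSpace Z] (α : Ordinal.{0}) : Prop :=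
  ∀ A : Set Z, IsAlphaEmbedded α A

/-- The projection of the product `∀ t, X t` onto the coordinates in `S`. -/
def proj {T : Type*} {X : T → Type*} (S : Set T) (x : ∀ t, X t) : ∀ t : S, X t.1 :=
  fun t => x t.1

/-- A functionally measurable (Baire) set: a member of some functionally additive or
multiplicative class `α` with `α < ω₁`. -/
def FunctionallyMeasurable {Z : Type*} [TopologicalSpace Z] (A : Set Z) : Prop :=
  ∃ (b : Bool) (β : Ordinal.{0}), β < (Cardinal.aleph 1).ord ∧ FunClass Z b β A

/-- `Y` has a regular `Gδ`-diagonal. -/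
def RegularGDeltaDiagonal (Y : Type*) [TopologicalSpace Y] : Prop :=
  ∃ G : ℕ → Set (Y × Y), (∀ n, IsOpen (G n)) ∧
    {p : Y × Y | p.1 = p.2} = ⋂ n, G n ∧
    {p : Y × Y | p.1 = p.2} = ⋂ n, closure (G n)

/-! ### Functional classes under continuous maps -/

theorem FunClass.preimage {Y Z : Type*} [TopologicalSpace Y] [TopologicalSpace Z] {g : Y → Z}
    (hg : Continuous g) {b : Bool} {β : Ordinal.{0}} {A : Set Z} (h : FunClass Z b β A) :
    FunClass Y b β (g ⁻¹' A) := by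
  induction h with
  | open_ A h =>
    obtain ⟨f, hf, hA⟩ := h
    exact .open_ _ ⟨f ∘ g, hf.comp hg, by rw [← preimage_compl, hA]; rfl⟩
  | closed_ A h =>
    obtain ⟨f, hf, hA⟩ := h
    exact .closed_ _ ⟨f ∘ g, hf.comp hg, by rw [hA]; rfl⟩
  | union α A β hα hβ h ih =>
    rw [preimage_iUnion]
    exact .union _ _ β hα hβ ih
  | inter α A β hα hβ h ih =>
    rw [preimage_iInter]
    exact .inter _ _ β hα hβ ih

/-- If every continuous real function on `Z` depends, along `q : Z → ∏ t, X t`, on countably many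
coordinates, then so does every set of a functional class in `Z`. -/
theorem FunClass.exists_countable_determining {T : Type*} {X : T → Type*} {Z : Type*}
    [TopologicalSpace Z] (q : Z → ∀ t, X t)
    (hq : ∀ f : Z → ℝ, Continuous f →
      ∃ A : Set T, A.Countable ∧ ∀ z z', (∀ t ∈ A, q z t = q z' t) → f z = f z')
    {b : Bool} {β : Ordinal.{0}} {B : Set Z} (h : FunClass Z b β B) :
    ∃ A : Set T, A.Countable ∧ ∀ z z', (∀ t ∈ A, q z t = q z' t) → (z ∈ B ↔ z' ∈ B) := by
  induction h with
  | open_ B h =>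
    obtain ⟨f, hf, hB⟩ := h
    obtain ⟨A, hA, h⟩ := hq f hf
    refine ⟨A, hA, fun z z' hz => not_iff_not.1 ?_⟩
    rw [← mem_compl_iff, ← mem_compl_iff, hB, mem_preimage, mem_preimage, h z z' hz]
  | closed_ B h =>
    obtain ⟨f, hf, hB⟩ := h
    obtain ⟨A, hA, h⟩ := hq f hf
    refine ⟨A, hA, fun z z' hz => ?_⟩
    rw [hB, mem_preimage, mem_preimage, h z z' hz]
  | union α B β hα hβ h ih =>
    choose A hA h using ih
    refine ⟨⋃ n, A n, countable_iUnion hA, fun z z' hz => ?_⟩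
    simp only [mem_iUnion]
    exact exists_congr fun n => h n z z' fun t ht => hz t (mem_iUnion_of_mem n ht)
  | inter α B β hα hβ h ih =>
    choose A hA h using ih
    refine ⟨⋃ n, A n, countable_iUnion hA, fun z z' hz => ?_⟩
    simp only [mem_iInter]
    exact forall_congr' fun n => h n z z' fun t ht => hz t (mem_iUnion_of_mem n ht)

/-! ### Uncountable families of countable sets -/

/-- A maximal disjoint subfamily is either uncountable, or its union is a countable set meeting
every nonempty member of the family. -/
theorem exists_uncountable_pairwiseDisjoint_or {ι T : Type*} (D : ι → Set T)
    (hD : ∀ i, (D i).Countable) (C : Set ι) :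
    (∃ J ⊆ C, ¬ J.Countable ∧ J.PairwiseDisjoint D) ∨
      ∃ A : Set T, A.Countable ∧ ∀ i ∈ C, Disjoint (D i) A → D i = ∅ := by
  obtain ⟨J, hJ⟩ := zorn_subset {J : Set ι | J ⊆ C ∧ J.PairwiseDisjoint D} (by
    intro c hc hchain
    refine ⟨⋃₀ c, ⟨sUnion_subset fun s hs => (hc hs).1, ?_⟩, fun s hs => subset_sUnion_of_mem hs⟩
    exact (pairwiseDisjoint_sUnion hchain.directedOn).2 fun s hs => (hc hs).2)
  by_cases hcount : J.Countable
  · refine Or.inr ⟨⋃ i ∈ J, D i, hcount.biUnion fun i _ => hD i, fun i hi hdis => ?_⟩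
    have hins : insert i J ∈ {J : Set ι | J ⊆ C ∧ J.PairwiseDisjoint D} := by
      refine ⟨insert_subset hi hJ.prop.1, hJ.prop.2.insert fun j hj _ => ?_⟩
      exact hdis.mono_right (subset_biUnion_of_mem (u := D) hj)
    have hiJ : i ∈ J := hJ.le_of_ge hins (subset_insert i J) (mem_insert i J)
    exact disjoint_self.1 (hdis.mono_right (subset_biUnion_of_mem (u := D) hiJ))
  · exact Or.inl ⟨J, hJ.prop.1, hcount, hJ.prop.2⟩

/-- A weak `Δ`-system lemma: an uncountable family of finite sets has an uncountable subfamily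
whose members are pairwise disjoint off a countable set `R`. -/
theorem exists_uncountable_pairwiseDisjoint_diff {ι T : Type*} (K : ι → Finset T)
    {J : Set ι} (hJ : ¬ J.Countable) :
    ∃ J' ⊆ J, ¬ J'.Countable ∧ ∃ R : Set T, R.Countable ∧
      J'.PairwiseDisjoint (fun i => (K i : Set T) \ R) := by
  have main : ∀ (n : ℕ) (R : Set T), R.Countable → ∀ C : Set ι, ¬ C.Countable →
      (∀ i ∈ C, ((K i : Set T) \ R).ncard ≤ n) →
      ∃ J' ⊆ C, ¬ J'.Countable ∧ ∃ R : Set T, R.Countable ∧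
        J'.PairwiseDisjoint (fun i => (K i : Set T) \ R) := by
    intro n
    induction n with
    | zero =>
      intro R hR C hC hn
      refine ⟨C, subset_rfl, hC, R, hR, fun i hi j _ _ => ?_⟩
      have : (K i : Set T) \ R = ∅ :=
        (ncard_eq_zero ((K i).finite_toSet.sdiff)).1 (Nat.le_zero.1 (hn i hi))
      simp only [Function.onFun, this]
      exact disjoint_bot_left
    | succ n ih =>
      intro R hR C hC hn
      rcases exists_uncountable_pairwiseDisjoint_or (fun i => (K i : Set T) \ R)
        (fun i => ((K i).finite_toSet.sdiff).countable) C with ⟨J', hJ', hc, hd⟩ | ⟨A, hA, h⟩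
      · exact ⟨J', hJ', hc, R, hR, hd⟩
      · refine ih (R ∪ A) (hR.union hA) C hC fun i hi => ?_
        have hfin : ((K i : Set T) \ R).Finite := (K i).finite_toSet.sdiff
        rw [← sdiff_sdiff]
        by_cases hdis : Disjoint ((K i : Set T) \ R) A
        · simp [h i hi hdis]
        · obtain ⟨t, ht, htA⟩ := not_disjoint_iff.1 hdis
          have hlt : (((K i : Set T) \ R) \ A).ncard < ((K i : Set T) \ R).ncard :=
            ncard_lt_ncard ⟨sdiff_subset, fun hsub => (hsub ht).2 htA⟩ hfin
          have := hn i hi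
          omega
  obtain ⟨n, hn⟩ : ∃ n : ℕ, ¬ {i ∈ J | (K i).card ≤ n}.Countable := by
    by_contra! hcon
    refine hJ ((countable_iUnion hcon).mono fun i hi => ?_)
    exact mem_iUnion.2 ⟨(K i).card, hi, le_rfl⟩
  obtain ⟨J', hJ', h⟩ := main n ∅ countable_empty _ hn fun i hi => by
    simpa using hi.2
  exact ⟨J', hJ'.trans (sep_subset _ _), h⟩

theorem finite_not_disjoint {ι T : Type*} {D : ι → Set T} {J : Set ι}
    (hJ : J.PairwiseDisjoint D) {L : Set T} (hL : L.Finite) :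
    {i ∈ J | ∃ t ∈ L, t ∈ D i}.Finite := by
  refine (hL.biUnion (t := fun t => {i ∈ J | t ∈ D i}) fun t _ => ?_).subset ?_
  · refine Set.Subsingleton.finite fun i hi j hj => ?_
    by_contra hij
    exact disjoint_left.1 (hJ hi.1 hj.1 hij) hi.2 hj.2
  · rintro i ⟨hi, t, ht, hti⟩
    exact mem_biUnion ht ⟨hi, hti⟩

/-! ### Functions depending on countably many coordinates -/

/-- The version of pseudo-ℵ₁-compactness for indexed families, whose members may repeat: an
uncountable family of nonempty open sets accumulates at some point. -/
theorem PseudoAleph1Compact.exists_accumulation {Z ι : Type*} [TopologicalSpace Z]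
    (hZ : PseudoAleph1Compact Z) {J : Set ι} (hJ : ¬ J.Countable) (W : ι → Set Z)
    (hW : ∀ i ∈ J, IsOpen (W i)) (hne : ∀ i ∈ J, (W i).Nonempty) :
    ∃ z, ∀ O ∈ 𝓝 z, {i ∈ J | (W i ∩ O).Nonempty}.Infinite := by
  by_contra! hcon
  apply hJ
  have hc : (W '' J).Countable := by
    refine hZ _ (by rintro _ ⟨i, hi, rfl⟩; exact hW i hi)
      (by rintro _ ⟨i, hi, rfl⟩; exact hne i hi) fun z => ?_
    obtain ⟨O, hO, hfin⟩ := hcon z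
    refine ⟨O, hO, Set.Finite.of_finite_image (hfin.image W |>.subset ?_)
      Subtype.val_injective.injOn⟩
    rintro _ ⟨⟨_, i, hi, rfl⟩, hU, rfl⟩
    exact ⟨i, ⟨hi, hU⟩, rfl⟩
  have hcover : J ⊆ ⋃ U ∈ W '' J, {i ∈ J | W i = U} :=
    fun i hi => mem_iUnion₂.2 ⟨W i, mem_image_of_mem W hi, hi, rfl⟩
  refine Set.Countable.mono hcover (hc.biUnion ?_)
  rintro _ ⟨i, hi, rfl⟩
  obtain ⟨z, hz⟩ := hne i hi
  obtain ⟨O, hO, hfin⟩ := hcon z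
  refine (hfin.subset ?_).countable
  rintro j ⟨hj, hji⟩
  exact ⟨hj, z, hji ▸ hz, mem_of_mem_nhds hO⟩

theorem isOpen_subbox {T : Type*} {X : T → Type*} [∀ t, TopologicalSpace (X t)] {Q : Set T}
    (F : Set (∀ t : Q, X t.1)) (K : Finset T) (U : ∀ t, Set (X t)) (hU : ∀ t ∈ K, IsOpen (U t)) :
    IsOpen {w : F | ∀ t ∈ K, ∀ h : t ∈ Q, w.1 ⟨t, h⟩ ∈ U t} := by
  have : {w : F | ∀ t ∈ K, ∀ h : t ∈ Q, w.1 ⟨t, h⟩ ∈ U t} =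
      ⋂ t ∈ K, {w : F | ∀ h : t ∈ Q, w.1 ⟨t, h⟩ ∈ U t} := by
    ext w; simp
  rw [this]
  refine isOpen_biInter_finset fun t ht => ?_
  by_cases h : t ∈ Q
  · simp only [h, forall_true_left]
    exact (hU t ht).preimage
      ((continuous_apply (A := fun t : Q => X t.1) ⟨t, h⟩).comp continuous_subtype_val)
  · simp [h]

/-- The data of two boxes over the same finite set `K` of coordinates and of a point for each.
The conditions on these data are collected in `BoxPair.Separates`. -/
structure BoxPair {T : Type*} (X : T → Type*) where
  /-- the coordinates restricted by the boxes -/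
  K : Finset T
  /-- the coordinates on which the boxes may differ -/
  D : Finset T
  /-- the sides of the first box -/
  U : ∀ t, Set (X t)
  /-- the sides of the second box -/
  V : ∀ t, Set (X t)
  /-- a point of the first box -/
  x : ∀ t, X t
  /-- a point of the second box -/
  y : ∀ t, X t

/-- The first box is open and `x` lies in `E`, the sides of the two boxes agree off `D`, which
misses `S`, and `f` differs by more than `ε` between any two points of `E` taken from the two boxes. -/
structure BoxPair.Separates {T : Type*} {X : T → Type*} [∀ t, TopologicalSpace (X t)]
    (p : BoxPair X) (S : Set T) (E : Set (∀ t, X t)) (f : (∀ t, X t) → ℝ) (ε : ℝ) : Prop where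
  openU : ∀ t ∈ p.K, IsOpen (p.U t)
  disj : ∀ t ∈ p.D, t ∉ S
  eq : ∀ t ∈ p.K, t ∉ p.D → p.U t = p.V t
  memE : p.x ∈ E
  memU : ∀ t ∈ p.K, p.x t ∈ p.U t
  memV : ∀ t ∈ p.K, p.y t ∈ p.V t
  sep : ∀ u ∈ E, ∀ v ∈ E, (∀ t ∈ p.K, u t ∈ p.U t) → (∀ t ∈ p.K, v t ∈ p.V t) →
    ε < |f u - f v|

/-- Continuity at `x` within `E`, phrased with a basic open box. -/
theorem exists_box_of_continuousOn {T : Type*} {X : T → Type*} [∀ t, TopologicalSpace (X t)]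
    {E : Set (∀ t, X t)} {f : (∀ t, X t) → ℝ} (hf : ContinuousOn f E) {x : ∀ t, X t} (hx : x ∈ E)
    {δ : ℝ} (hδ : 0 < δ) :
    ∃ (K : Finset T) (U : ∀ t, Set (X t)), (∀ t, IsOpen (U t)) ∧ (∀ t, x t ∈ U t) ∧
      ∀ u ∈ E, (∀ t ∈ K, u t ∈ U t) → |f u - f x| < δ := by
  classical
  have h : ∀ᶠ u in 𝓝[E] x, |f u - f x| < δ := by
    have := (hf x hx).eventually (Metric.ball_mem_nhds (f x) hδ)
    simpa [Real.dist_eq] using this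
  obtain ⟨O, hO, hxO, hsub⟩ := mem_nhdsWithin.1 h
  obtain ⟨K, U, hU, hKU⟩ := isOpen_pi_iff.1 hO x hxO
  refine ⟨K, fun t => if t ∈ K then U t else univ, fun t => ?_, fun t => ?_, fun u hu h => ?_⟩
  · by_cases ht : t ∈ K
    · simpa [ht] using (hU t ht).1
    · simp [ht]
  · by_cases ht : t ∈ K
    · simpa [ht] using (hU t ht).2
    · simp [ht]
  · refine hsub ⟨hKU fun t ht => ?_, hu⟩
    simpa [Finset.mem_coe.1 ht] using h t ht

/-- Points of `E` that agree on `A` but have `f`-values more than `ε` apart extend to a pair of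
boxes which separates and whose sides differ only off `A`. -/
theorem exists_separates {T : Type*} {X : T → Type*} [∀ t, TopologicalSpace (X t)]
    {S A : Set T} (hSA : S ⊆ A) {E : Set (∀ t, X t)} {f : (∀ t, X t) → ℝ}
    (hf : ContinuousOn f E) {ε : ℝ} {x y : ∀ t, X t} (hx : x ∈ E) (hy : y ∈ E)
    (hxy : ∀ t ∈ A, x t = y t) (hε : ε < |f x - f y|) :
    ∃ p : BoxPair X, p.Separates S E f ε ∧ ∀ t ∈ p.D, t ∉ A := by
  classical
  have hδ : 0 < (|f x - f y| - ε) / 2 := by linarith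
  obtain ⟨K₁, U, hU, hxU, hK₁⟩ := exists_box_of_continuousOn hf hx hδ
  obtain ⟨K₂, V, hV, hyV, hK₂⟩ := exists_box_of_continuousOn hf hy hδ
  -- On the coordinates in `A`, where `x` and `y` agree, both sides are shrunk to `U t ∩ V t`.
  refine ⟨⟨K₁ ∪ K₂, (K₁ ∪ K₂).filter (· ∉ A), fun t => if t ∈ A then U t ∩ V t else U t,
    fun t => if t ∈ A then U t ∩ V t else V t, x, y⟩, ⟨?_, ?_, ?_, hx, ?_, ?_, ?_⟩, ?_⟩
  · intro t _
    by_cases h : t ∈ A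
    · simpa [h] using (hU t).inter (hV t)
    · simpa [h] using hU t
  · intro t ht hS
    exact (Finset.mem_filter.1 ht).2 (hSA hS)
  · intro t ht htD
    have h : t ∈ A := by
      by_contra h
      exact htD (Finset.mem_filter.2 ⟨ht, h⟩)
    simp [h]
  · intro t _
    by_cases h : t ∈ A
    · simpa [h] using ⟨hxU t, hxy t h ▸ hyV t⟩
    · simpa [h] using hxU t
  · intro t _
    by_cases h : t ∈ A
    · simpa [h] using ⟨hxy t h ▸ hxU t, hyV t⟩
    · simpa [h] using hyV t
  · intro u hu v hv huU hvV
    have h1 := hK₁ u hu fun t ht => by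
      have := huU t (Finset.mem_union_left _ ht)
      by_cases h : t ∈ A
      · simp only [h, if_true] at this
        exact this.1
      · simpa [h] using this
    have h2 := hK₂ v hv fun t ht => by
      have := hvV t (Finset.mem_union_right _ ht)
      by_cases h : t ∈ A
      · simp only [h, if_true] at this
        exact this.2
      · simpa [h] using this
    have h3 : |f x - f y| ≤ |f u - f x| + |f u - f v| + |f v - f y| := by
      have e : f x - f y = -(f u - f x) + (f u - f v) + (f v - f y) := by ring
      calc |f x - f y| = |-(f u - f x) + (f u - f v) + (f v - f y)| := by rw [e]
        _ ≤ |-(f u - f x)| + |f u - f v| + |f v - f y| := abs_add_three _ _ _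
        _ = _ := by rw [abs_neg]
    linarith
  · intro t ht
    exact (Finset.mem_filter.1 ht).2

/-- There is no uncountable family of separating box pairs with pairwise disjoint difference
sets: such a family would accumulate at a point of `E` where `f` oscillates by at least `ε`. -/
theorem countable_of_separates {T : Type*} {X : T → Type*} [∀ t, TopologicalSpace (X t)]
    (hher : ∀ T₀ : Set T, T₀.Countable →
      ∀ A : Set (∀ t : T₀, X t.1), PseudoAleph1Compact ↥A)
    {S : Set T} (hS : S.Countable) {E : Set (∀ t, X t)}
    (hSE : ∀ x y : ∀ t, X t, (∀ t ∈ S, x t = y t) → x ∈ E → y ∈ E)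
    {f : (∀ t, X t) → ℝ} (hf : ContinuousOn f E) {ε : ℝ} (hε : 0 < ε) {J : Set (BoxPair X)}
    (hJ : ∀ p ∈ J, p.Separates S E f ε) (hD : J.PairwiseDisjoint fun p => (p.D : Set T)) :
    J.Countable := by
  classical
  by_contra hcount
  obtain ⟨J', hJ'J, hJ'c, R, hR, hRd⟩ :=
    exists_uncountable_pairwiseDisjoint_diff (fun p : BoxPair X => p.K) hcount
  set Q : Set T := S ∪ R with hQdef
  have hQ : Q.Countable := hS.union hR
  let F : Set (∀ t : Q, X t.1) := proj Q '' E
  obtain ⟨⟨_, z, hzE, rfl⟩, hz⟩ := (hher Q hQ F).exists_accumulation hJ'c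
    (fun p => {w : F | ∀ t ∈ p.K, ∀ h : t ∈ Q, w.1 ⟨t, h⟩ ∈ p.U t})
    (fun p hp => isOpen_subbox F p.K p.U (hJ p (hJ'J hp)).openU)
    (fun p hp => ⟨⟨proj Q p.x, p.x, (hJ p (hJ'J hp)).memE, rfl⟩,
      fun t ht _ => (hJ p (hJ'J hp)).memU t ht⟩)
  obtain ⟨L, O, hO, hzO, hL⟩ := exists_box_of_continuousOn hf hzE (half_pos hε)
  have hinf := hz {w : F | ∀ t ∈ L, ∀ h : t ∈ Q, w.1 ⟨t, h⟩ ∈ O t}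
    ((isOpen_subbox F L O fun t _ => hO t).mem_nhds fun t _ _ => hzO t)
  have hfin := (finite_not_disjoint hRd L.finite_toSet).union
    (finite_not_disjoint (hD.subset hJ'J) L.finite_toSet)
  obtain ⟨p, ⟨hp, ⟨_, e, heE, rfl⟩, hwU, hwO⟩, hpL⟩ := (hinf.sdiff hfin).nonempty
  have hpK : ∀ t ∈ L, t ∈ p.K → t ∈ R := by
    intro t ht htK
    by_contra htR
    exact hpL (Or.inl ⟨hp, t, ht, htK, htR⟩)
  have hpD : ∀ t ∈ L, t ∉ p.D := fun t ht htD => hpL (Or.inr ⟨hp, t, ht, htD⟩)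
  have hsep := hJ p (hJ'J hp)
  -- `u` lies in the first box and near `z`; `v` moves it into the second box, staying near `z`.
  let u : ∀ t, X t := fun t => if t ∈ Q then e t else if t ∈ p.K then p.x t else z t
  let v : ∀ t, X t := fun t => if t ∈ p.D then p.y t else u t
  have huE : u ∈ E := hSE e u (fun t ht => by
    have : t ∈ Q := Or.inl ht
    simp [u, this]) heE
  have hvE : v ∈ E := hSE u v (fun t ht => by
    have : t ∉ p.D := fun h => hsep.disj t h ht
    simp [v, this]) huE
  have huU : ∀ t ∈ p.K, u t ∈ p.U t := by
    intro t ht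
    by_cases h : t ∈ Q
    · simpa [u, h, proj] using hwU t ht h
    · simpa [u, h, ht] using hsep.memU t ht
  have hvV : ∀ t ∈ p.K, v t ∈ p.V t := by
    intro t ht
    by_cases h : t ∈ p.D
    · simpa [v, h] using hsep.memV t ht
    · simpa [v, h, ← hsep.eq t ht h] using huU t ht
  have huO : ∀ t ∈ L, u t ∈ O t := by
    intro t ht
    by_cases h : t ∈ Q
    · simpa [u, h, proj] using hwO t ht h
    · have : t ∉ p.K := fun hK => h (Or.inr (hpK t ht hK))
      simpa [u, h, this] using hzO t
  have hvO : ∀ t ∈ L, v t ∈ O t := by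
    intro t ht
    simpa [v, hpD t ht] using huO t ht
  have h1 := hL u huE huO
  have h2 := hL v hvE hvO
  have h3 := hsep.sep u huE v hvE huU hvV
  have h4 := abs_sub_le (f u) (f z) (f v)
  rw [abs_sub_comm (f z) (f v)] at h4
  linarith

/-- If all subspaces of countable subproducts are pseudo-ℵ₁-compact, then a continuous real
function on a set `E` determined by countably many coordinates depends on countably many
coordinates. -/
theorem exists_countable_dependsOn {T : Type*} {X : T → Type*} [∀ t, TopologicalSpace (X t)]
    (hher : ∀ T₀ : Set T, T₀.Countable →
      ∀ A : Set (∀ t : T₀, X t.1), PseudoAleph1Compact ↥A)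
    {S : Set T} {E : Set (∀ t, X t)} {f : (∀ t, X t) → ℝ} (hS : S.Countable)
    (hSE : ∀ x y : ∀ t, X t, (∀ t ∈ S, x t = y t) → x ∈ E → y ∈ E)
    (hf : ContinuousOn f E) :
    ∃ A : Set T, A.Countable ∧ ∀ x ∈ E, ∀ y ∈ E, (∀ t ∈ A, x t = y t) → f x = f y := by
  have step : ∀ n : ℕ, ∃ A : Set T, A.Countable ∧ ∀ x ∈ E, ∀ y ∈ E,
      (∀ t ∈ A, x t = y t) → |f x - f y| ≤ 1 / ((n : ℝ) + 1) := by
    intro n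
    have hε : 0 < 1 / ((n : ℝ) + 1) := by positivity
    rcases exists_uncountable_pairwiseDisjoint_or (fun p : BoxPair X => (p.D : Set T))
      (fun p => p.D.countable_toSet) {p | p.Separates S E f (1 / ((n : ℝ) + 1))} with
      ⟨J, hJ, hJc, hd⟩ | ⟨A, hA, h⟩
    · exact absurd (countable_of_separates hher hS hSE hf hε hJ hd) hJc
    · refine ⟨S ∪ A, hS.union hA, fun x hx y hy hxy => ?_⟩
      by_contra! hlt
      obtain ⟨p, hp, hpD⟩ := exists_separates (subset_union_left : S ⊆ S ∪ A) hf hx hy hxy hlt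
      have hD : (p.D : Set T) = ∅ :=
        h p hp (disjoint_left.2 fun t ht htA => hpD t ht (Or.inr htA))
      -- With `D` empty the two boxes coincide, so `p.x` is separated from itself.
      have hlt' := hp.sep p.x hp.memE p.x hp.memE hp.memU fun t ht => by
        have htD : t ∉ p.D := fun h => by
          have : t ∈ (p.D : Set T) := h
          simp [hD] at this
        exact hp.eq t ht htD ▸ hp.memU t ht
      rw [sub_self, abs_zero] at hlt'
      exact absurd hlt' (not_lt.2 hε.le)
  choose A hA h using step
  refine ⟨⋃ n, A n, countable_iUnion hA, fun x hx y hy hxy => ?_⟩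
  by_contra hne
  obtain ⟨n, hn⟩ := exists_nat_one_div_lt (abs_pos.2 (sub_ne_zero.2 hne))
  exact absurd (h n x hx y hy fun t ht => hxy t (mem_iUnion_of_mem n ht)) (not_le.2 hn)

/-! ### α-embedding of functionally measurable sets -/

/-- if the product `∏ t, X t` is pseudo-ℵ₁-compact and every at most
countable subproduct is α-universal and hereditarily pseudo-ℵ₁-compact, then every
functionally measurable set `E` in the product is α-embedded in it. -/
theorem statement10 {T : Type u} {X : T → Type v} [∀ t, TopologicalSpace (X t)]
    [∀ t, Nonempty (X t)]
    (α : Ordinal.{0}) (hα : α < (Cardinal.aleph 1).ord)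
    (hX : PseudoAleph1Compact (∀ t, X t))
    (huniv : ∀ T₀ : Set T, T₀.Countable → AlphaUniversal (∀ t : T₀, X t.1) α)
    (hher : ∀ T₀ : Set T, T₀.Countable →
      ∀ A : Set (∀ t : T₀, X t.1), PseudoAleph1Compact ↥A)
    (E : Set (∀ t, X t)) (hE : FunctionallyMeasurable E) :
    IsAlphaEmbedded α E := by
  obtain ⟨b, β, -, hEβ⟩ := hE
  -- `E` itself is determined by a countable set `S` of coordinates.
  obtain ⟨S, hS, hSE⟩ := FunClass.exists_countable_determining (fun x : ∀ t, X t => x)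
    (fun f hf => by
      obtain ⟨A, hA, h⟩ := exists_countable_dependsOn hher (E := Set.univ) countable_empty
        (fun _ _ _ _ => mem_univ _) hf.continuousOn
      exact ⟨A, hA, fun x y hxy => h x (mem_univ _) y (mem_univ _) hxy⟩) hEβ
  have hSE' : ∀ x y : ∀ t, X t, (∀ t ∈ S, x t = y t) → x ∈ E → y ∈ E :=
    fun x y hxy => (hSE x y hxy).1
  intro B hBE hB
  obtain ⟨A, hA, hAB⟩ := FunClass.exists_countable_determining (fun x : E => x.1)
    (fun f hf => by
      classical
      obtain ⟨A, hA, h⟩ := exists_countable_dependsOn hher (E := E)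
        (f := fun x => if hx : x ∈ E then f ⟨x, hx⟩ else 0) hS hSE' (by
          rw [continuousOn_iff_continuous_domRestrict]
          convert hf using 1
          ext x
          simp)
      refine ⟨A, hA, fun x y hxy => ?_⟩
      simpa using h x x.2 y y.2 hxy) hB
  classical
  set Q : Set T := S ∪ A with hQdef
  have hQ : Q.Countable := hS.union hA
  let a : ∀ t, X t := fun t => Classical.arbitrary (X t)
  let F : Set (∀ t : Q, X t.1) := proj Q '' E
  -- `s₀` is a continuous section of the projection onto the coordinates in `Q`.
  let s₀ : (∀ t : Q, X t.1) → ∀ t, X t := fun w t => if h : t ∈ Q then w ⟨t, h⟩ else a t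
  have hs₀ : Continuous s₀ := by
    refine continuous_pi fun t => ?_
    by_cases h : t ∈ Q
    · simp only [s₀, dif_pos h]; exact continuous_apply _
    · simp only [s₀, dif_neg h]; exact continuous_const
  have hagree : ∀ x : ∀ t, X t, ∀ t ∈ Q, x t = s₀ (proj Q x) t := by
    intro x t ht
    simp [s₀, ht, proj]
  have hs₀E : ∀ w ∈ F, s₀ w ∈ E := by
    rintro _ ⟨x, hx, rfl⟩
    exact hSE' x _ (fun t ht => hagree x t (Or.inl ht)) hx
  let s : F → E := fun w => ⟨s₀ w.1, hs₀E w.1 w.2⟩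
  have hs : Continuous s := (hs₀.comp continuous_subtype_val).subtype_mk _
  have hB' := hB.preimage hs
  obtain ⟨C, hC, hCF⟩ := huniv Q hQ F (Subtype.val '' (s ⁻¹' (Subtype.val ⁻¹' B)))
    (by rintro _ ⟨w, -, rfl⟩; exact w.2)
    (by rwa [preimage_image_eq _ Subtype.val_injective])
  refine ⟨proj Q ⁻¹' C, hC.preimage (continuous_pi fun t => continuous_apply _), ?_⟩
  have key : ∀ x ∈ E, proj Q x ∈ C ↔ x ∈ B := by
    intro x hx
    have hF : proj Q x ∈ F := ⟨x, hx, rfl⟩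
    have h1 : proj Q x ∈ C ↔ proj Q x ∈ C ∩ F := ⟨fun h => ⟨h, hF⟩, fun h => h.1⟩
    rw [h1, hCF]
    have h2 := hAB ⟨x, hx⟩ (s ⟨_, hF⟩) (fun t ht => hagree x t (Or.inr ht))
    constructor
    · rintro ⟨w, hw, hwx⟩
      have : w = ⟨proj Q x, hF⟩ := Subtype.ext hwx
      subst this
      exact h2.2 hw
    · intro hxB
      exact ⟨⟨_, hF⟩, h2.1 hxB, rfl⟩
  ext x
  constructor
  · rintro ⟨hx, hxE⟩
    exact (key x hxE).1 hx
  · intro hx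
    exact ⟨(key x (hBE hx)).2 hx, hBE hx⟩
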